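/- arXiv:2008.00788 — 2 statements merged into one kernel-verified Lean document; each statement's English description precedes it below -/
import Mathlib

section
/- If h : Σ_N^+ → ℝ is an energy minimizer, say constant on every cylinder set of length m+1, then for every continuous u : Σ_N^+ → ℝ the limit E(h,u) = lim_{n→∞} E_{H_n}(h|_{V_n}, u|_{V_n}) exists and equals E_{H_m}(h|_{V_m}, u|_{V_m}); in particular E(h) = E_{H_m}(h|_{V_m}). -/
open Filter Topology MeasureTheory Finset Classical

noncomputable section

/-- The one-sided full shift space `Σ_N^+` on `N` symbols; coordinates are indexed
from `0`, so the paper's `x_1 x_2 ⋯` is `x 0, x 1, ⋯` here. It carries the product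
of the discrete topology on `Fin N`. -/
abbrev SSp (N : ℕ) : Type := ℕ → Fin N

/-- The level-`m` vertex set `V_m = {p : p_i = p_{i+1} for all i ≥ m+1}` (1-based),
i.e. the sequences that are constant from (0-based) coordinate `m` on.  It is
realized as a `Finset` via the parametrization by the first `m+1` coordinates;
see `mem_V` for the defining property. -/
noncomputable def V (N m : ℕ) : Finset (SSp N) :=
  (Finset.univ : Finset (Fin (m + 1) → Fin N)).image
    (fun w j => w ⟨min j m, by omega⟩)

lemma const_from (N m : ℕ) (p : SSp N) (h : ∀ i, m ≤ i → p i = p (i + 1)) :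
    ∀ j, m ≤ j → p j = p m := by
  intro j hj
  induction j with
  | zero => have : m = 0 := by omega
            simp [this]
  | succ k ih =>
      rcases Nat.lt_or_ge k m with hk | hk
      · have : m = k + 1 := by omega
        simp [this]
      · rw [← h k hk]
        exact ih hk

/-- Membership in `V N m` is exactly the paper's condition
`p_i = p_{i+1}` for all `i ≥ m+1` (1-based), i.e. `p i = p (i+1)` for all `i ≥ m`. -/
lemma mem_V {N m : ℕ} {p : SSp N} :
    p ∈ V N m ↔ ∀ i, m ≤ i → p i = p (i + 1) := by
  classical
  constructor
  · intro hp i hi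
    simp only [V, Finset.mem_image] at hp
    obtain ⟨w, -, rfl⟩ := hp
    have h1 : min i m = m := by omega
    have h2 : min (i + 1) m = m := by omega
    simp [h1, h2]
  · intro h
    simp only [V, Finset.mem_image]
    refine ⟨fun j => p j, Finset.mem_univ _, ?_⟩
    funext j
    rcases Nat.lt_or_ge j m with hj | hj
    · have : min j m = j := by omega
      simp [this]
    · have : min j m = m := by omega
      simp only [this]
      exact (const_from N m p h j hj).symm

/-- The deleted neighbourhood `U_{p,m} = {q ∈ V_m : q ≠ p, q_i = p_i for 1 ≤ i ≤ m}`
(1-based), i.e. `q` agrees with `p` on the first `m` (0-based: `i < m`) coordinates. -/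
noncomputable def U (N m : ℕ) (p : SSp N) : Finset (SSp N) :=
  (V N m).filter (fun q => q ≠ p ∧ ∀ i, i < m → q i = p i)

/-- `κ_p = min {j : p ∈ V_j}`. -/
noncomputable def kappa (N : ℕ) (p : SSp N) : ℕ := sInf {j | p ∈ V N j}

/-- The difference operator
`H_m u (p) = Σ_{i = κ_p}^{m} Σ_{q ∈ U_{p,i}} (u(q) − u(p))`. -/
noncomputable def H (N m : ℕ) (u : SSp N → ℝ) (p : SSp N) : ℝ :=
  ∑ i ∈ Finset.Icc (kappa N p) m, ∑ q ∈ U N i p, (u q - u p)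

/-- The Dirichlet form `E_{H_m}(u, v) = − Σ_{p ∈ V_m} u(p) · H_m v(p)`. -/
noncomputable def EH (N m : ℕ) (u v : SSp N → ℝ) : ℝ :=
  -∑ p ∈ V N m, u p * H N m v p

/-- The cylinder set `[p_1 ⋯ p_m]`, determined by the first `m` coordinates of `p`. -/
def cyl (N m : ℕ) (p : SSp N) : Set (SSp N) := {x | ∀ i, i < m → x i = p i}

/-- `χ_p^m` : the indicator function of the cylinder set `[p_1 ⋯ p_{m+1}]`. -/
noncomputable def chi (N m : ℕ) (p : SSp N) : SSp N → ℝ :=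
  (cyl N (m + 1) p).indicator 1

/-- `u ∈ dom E`: `u` is continuous and the energy
`E(u) = lim_m E_{H_m}(u|_{V_m})` exists (and is finite). -/
def MemDomE (N : ℕ) (u : SSp N → ℝ) : Prop :=
  Continuous u ∧ ∃ L : ℝ, Tendsto (fun m => EH N m u u) atTop (nhds L)

/-- `v ∈ dom_M E`: `v` has finite energy and vanishes on the boundary `V_M`. -/
def MemDomME (N M : ℕ) (v : SSp N → ℝ) : Prop :=
  MemDomE N v ∧ ∀ p ∈ V N M, v p = 0

/-- `u ∈ 𝒟_M` with `Δ u = f` (strong formulation with boundary `V_M`):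
`u` and `f` are continuous and
`lim_{m → ∞} max_{p ∈ V_m ∖ V_M} |N^{m+1} H_m u(p) − f(p)| = 0`. -/
def IsLaplacianOn (N M : ℕ) (u f : SSp N → ℝ) : Prop :=
  Continuous u ∧ Continuous f ∧
    ∀ ε : ℝ, 0 < ε → ∃ m₀ : ℕ, ∀ m, m₀ ≤ m → ∀ p ∈ V N m, p ∉ V N M →
      |(N : ℝ) ^ (m + 1) * H N m u p - f p| < ε

/-- `u ∈ D_μ` with `Δ u = f` (original definition of the Laplacian):
`u` and `f` are continuous and
`lim_{m → ∞} max_{p ∈ V_m ∖ V_{m−1}} |N^{m+1} H_m u(p) − f(p)| = 0`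
(the level is written `m+1` to avoid natural subtraction). -/
def IsLaplacianDmu (N : ℕ) (u f : SSp N → ℝ) : Prop :=
  Continuous u ∧ Continuous f ∧
    ∀ ε : ℝ, 0 < ε → ∃ m₀ : ℕ, ∀ m, m₀ ≤ m → ∀ p ∈ V N (m + 1), p ∉ V N m →
      |(N : ℝ) ^ (m + 2) * H N (m + 1) u p - f p| < ε

/-- `μ` is the equidistributed Bernoulli measure:
`μ([p_1 ⋯ p_m]) = N^{−m}` for every cylinder set. -/
def IsBernoulli (N : ℕ) (μ : Measure (SSp N)) : Prop :=
  ∀ (m : ℕ) (p : SSp N), μ (cyl N m p) = (N : ENNReal)⁻¹ ^ m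

/-- `ρ(x,y) = min {i : x_i ≠ y_i}` (1-based; `0`-based first disagreement plus one). -/
noncomputable def rho (N : ℕ) (x y : SSp N) : ℕ := sInf {i | x i ≠ y i} + 1

/-- The matrix `(G_m)_{pq}`: `2/N` if `q = p`, `1/N` if `q ∈ U_{p,m}`, `0` otherwise. -/
noncomputable def Gmat (N m : ℕ) (p q : SSp N) : ℝ :=
  if q = p then 2 / N else if q ∈ U N m p then 1 / N else 0

/-- The Green's function
`g(x,y) = Σ_{m=1}^{ρ(x,y)−1} Σ_{r,s ∈ V_m ∖ V_{m−1}} (G_m)_{rs} χ_r^m(x) χ_s^m(y)`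
for `ρ(x,y) > 1`, and `g(x,y) = 0` for `ρ(x,y) = 1` (the sum is then empty). -/
noncomputable def greenFn (N : ℕ) (x y : SSp N) : ℝ :=
  ∑ m ∈ Finset.Icc 1 (rho N x y - 1),
    ∑ r ∈ (V N m).filter (fun r => r ∉ V N (m - 1)),
      ∑ s ∈ (V N m).filter (fun s => s ∉ V N (m - 1)),
        Gmat N m r s * chi N m r x * chi N m s y

/-- The Green's operator `G_μ f (x) = ∫_{Σ_N^+ ∖ {x}} g(x,y) f(y) dμ(y)`. -/
noncomputable def Gop (N : ℕ) (μ : Measure (SSp N)) (f : SSp N → ℝ) (x : SSp N) : ℝ :=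
  ∫ y in ({x}ᶜ : Set (SSp N)), greenFn N x y * f y ∂μ

/-! Grouping the double sum defining `E_{H_m}` by levels and symmetrizing each level in `p` and `q`
gives
`E_{H_m}(u, v) = Σ_{i ≤ m} ½ Σ_{p ∈ V_i} Σ_{q ∈ U_{p,i}} (u(q) - u(p)) (v(q) - v(p))`.
If `h` is constant on cylinders of length `m + 1`, then for `i > m` it takes equal values at `p` and
at every `q ∈ U_{p,i}`, so no level beyond `m` contributes to `E_{H_n}(h, u)`. -/

/-- Discrete Green's identity; `ht` is the symmetry of the neighbour relation `y ∈ t x` on `s`, in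
the shape that exchanges the order of summation. -/
lemma two_mul_neg_sum_mul_sum_sub {α R : Type*} [Ring R] {s : Finset α} {t : α → Finset α}
    (ht : ∀ x y, x ∈ s ∧ y ∈ t x ↔ x ∈ t y ∧ y ∈ s) (f g : α → R) :
    2 * -∑ x ∈ s, f x * ∑ y ∈ t x, (g y - g x) =
      ∑ x ∈ s, ∑ y ∈ t x, (f y - f x) * (g y - g x) := by
  have hswap : ∑ x ∈ s, ∑ y ∈ t x, f y * (g y - g x) =
      -∑ x ∈ s, ∑ y ∈ t x, f x * (g y - g x) := by
    rw [Finset.sum_comm' ht]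
    simp only [← Finset.sum_neg_distrib, ← mul_neg, neg_sub]
  simp only [Finset.mul_sum _ _ (f _)]
  simp only [sub_mul, Finset.sum_sub_distrib, hswap, two_mul]
  rw [sub_eq_add_neg]

lemma V_mono (N : ℕ) : Monotone (V N) := fun _ _ hmn _ hp =>
  mem_V.2 fun i hi => mem_V.1 hp i (hmn.trans hi)

lemma kappa_le_iff {N k n : ℕ} {p : SSp N} (hp : p ∈ V N k) : kappa N p ≤ n ↔ p ∈ V N n :=
  ⟨fun hn => V_mono N hn (Nat.sInf_mem (s := {j | p ∈ V N j}) ⟨k, hp⟩), fun hn => Nat.sInf_le hn⟩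

lemma mem_U {N n : ℕ} {p q : SSp N} :
    q ∈ U N n p ↔ q ∈ V N n ∧ q ≠ p ∧ ∀ i, i < n → q i = p i :=
  Finset.mem_filter

lemma mem_U_symm {N n : ℕ} {p q : SSp N} (hp : p ∈ V N n) (hq : q ∈ U N n p) : p ∈ U N n q :=
  have ⟨_, hne, hagree⟩ := mem_U.1 hq
  mem_U.2 ⟨hp, hne.symm, fun i hi => (hagree i hi).symm⟩

lemma mem_V_and_mem_U_comm {N n : ℕ} (p q : SSp N) :
    p ∈ V N n ∧ q ∈ U N n p ↔ p ∈ U N n q ∧ q ∈ V N n :=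
  ⟨fun ⟨hp, hq⟩ => ⟨mem_U_symm hp hq, (mem_U.1 hq).1⟩,
    fun ⟨hp, hq⟩ => ⟨(mem_U.1 hp).1, mem_U_symm hq hp⟩⟩

/-- The contribution of the edges of level `i` to the Dirichlet form; every edge `{p, q}` occurs in
the double sum in both orders, hence the factor `1 / 2`. -/
def levelForm (N i : ℕ) (u v : SSp N → ℝ) : ℝ :=
  1 / 2 * ∑ p ∈ V N i, ∑ q ∈ U N i p, (u q - u p) * (v q - v p)

lemma levelForm_eq_neg_sum (N i : ℕ) (u v : SSp N → ℝ) :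
    levelForm N i u v = -∑ p ∈ V N i, u p * ∑ q ∈ U N i p, (v q - v p) := by
  rw [levelForm, ← two_mul_neg_sum_mul_sum_sub mem_V_and_mem_U_comm]
  ring

lemma EH_eq_sum_levelForm (N m : ℕ) (u v : SSp N → ℝ) :
    EH N m u v = ∑ i ∈ Finset.range (m + 1), levelForm N i u v := by
  have hlevels : ∀ p i, p ∈ V N m ∧ i ∈ Finset.Icc (kappa N p) m ↔
      p ∈ V N i ∧ i ∈ Finset.range (m + 1) := by
    intro p i
    rw [Finset.mem_Icc, Finset.mem_range, Nat.lt_succ_iff]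
    constructor
    · rintro ⟨hp, hκ, him⟩
      exact ⟨(kappa_le_iff hp).1 hκ, him⟩
    · rintro ⟨hp, him⟩
      exact ⟨V_mono N him hp, (kappa_le_iff hp).2 hp, him⟩
  simp only [EH, H, levelForm_eq_neg_sum, Finset.sum_neg_distrib]
  simp only [Finset.mul_sum _ _ (u _)]
  rw [Finset.sum_comm' hlevels]

lemma levelForm_eq_zero {N i : ℕ} {h : SSp N → ℝ}
    (hh : ∀ x y : SSp N, (∀ j, j < i → x j = y j) → h x = h y) (u : SSp N → ℝ) :
    levelForm N i h u = 0 := by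
  have hterm : ∀ p ∈ V N i, ∀ q ∈ U N i p, (h q - h p) * (u q - u p) = 0 := fun p _ q hq => by
    rw [hh q p (mem_U.1 hq).2.2, sub_self, zero_mul]
  rw [levelForm, Finset.sum_eq_zero fun p hp => Finset.sum_eq_zero (hterm p hp), mul_zero]

theorem statement2_general {N m n : ℕ} (hmn : m ≤ n) {h : SSp N → ℝ}
    (hmin : ∀ x y : SSp N, (∀ i, i < m + 1 → x i = y i) → h x = h y) (u : SSp N → ℝ) :
    EH N n h u = EH N m h u := by
  rw [EH_eq_sum_levelForm, EH_eq_sum_levelForm]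
  refine (Finset.sum_subset (Finset.range_mono (by omega)) fun i _ hi => ?_).symm
  have hmi : m + 1 ≤ i := not_lt.1 fun hlt => hi (Finset.mem_range.2 hlt)
  exact levelForm_eq_zero (fun x y hxy => hmin x y fun j hj => hxy j (hj.trans_le hmi)) u

/-- If `h` is an energy minimizer, constant on every cylinder set of
length `m+1`, then for every continuous `u` the limit `E(h,u) = lim_n E_{H_n}(h,u)`
exists and equals `E_{H_m}(h,u)`; in particular `E(h) = E_{H_m}(h)`. -/
theorem statement2 (N : ℕ) (hN : 2 ≤ N) (m : ℕ) (h : SSp N → ℝ)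
    (hmin : ∀ x y : SSp N, (∀ i, i < m + 1 → x i = y i) → h x = h y)
    (u : SSp N → ℝ) (hu : Continuous u) :
    Tendsto (fun n => EH N n h u) atTop (nhds (EH N m h u)) ∧
    Tendsto (fun n => EH N n h h) atTop (nhds (EH N m h h)) :=
  ⟨tendsto_atTop_of_eventually_const fun _ hn => statement2_general hn hmin u,
    tendsto_atTop_of_eventually_const fun _ hn => statement2_general hn hmin h⟩
end
end

section
/- Let M ≥ 0, m ≥ M+1 and p ∈ V_m ∖ V_M. Then the indicator function χ_p^m of the cylinder set [p_1⋯p_{m+1}] vanishes at every point of V_M and has finite energy; that is, χ_p^m ∈ dom_M E. -/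
open Filter Topology MeasureTheory Finset Classical

noncomputable section

/-!
`χ_p^m` depends only on the coordinates up to `m`, and a point of `U_{x,i}` agrees with `x` on the
first `i` coordinates. Hence the differences of levels `i > m` in `H_n χ_p^m` all vanish, and so
does `H_n χ_p^m` at the vertices outside `V_m`, where only such levels occur. The energies are
therefore constant from level `m` on. If `[p_1 ⋯ p_{m+1}]` met `V_M`, then `p` would be constant
from coordinate `M + 1` to `m + 1`, and, being in `V_m`, constant from there on, so `p ∈ V_M`.
-/

lemma continuous_of_dependsOn_finite {ι β : Type*} {X : ι → Type*} [∀ i, TopologicalSpace (X i)]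
    [∀ i, DiscreteTopology (X i)] [TopologicalSpace β] {f : (∀ i, X i) → β} {s : Set ι}
    (hs : s.Finite) (hf : DependsOn f s) : Continuous f := by
  refine continuous_iff_continuousAt.2 fun x => (continuousAt_const (y := f x)).congr ?_
  have hx : s.pi (fun i => {x i}) ∈ 𝓝 x :=
    set_pi_mem_nhds hs fun i _ => (isOpen_discrete {x i}).mem_nhds rfl
  filter_upwards [hx] with y hy
  exact hf fun i hi => (hy i hi).symm

section Vertices

variable {N m n : ℕ} {x : SSp N}

lemma V_mono_s5 (hmn : m ≤ n) : V N m ⊆ V N n :=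
  fun _ hx => mem_V.2 fun i hi => mem_V.1 hx i (hmn.trans hi)

lemma mem_V_kappa (hx : x ∈ V N n) : x ∈ V N (kappa N x) :=
  Nat.sInf_mem (s := {j | x ∈ V N j}) ⟨n, hx⟩

lemma lt_kappa_of_mem_of_notMem (hn : x ∈ V N n) (hm : x ∉ V N m) : m < kappa N x :=
  not_le.1 fun h => hm (V_mono_s5 h (mem_V_kappa hn))

lemma eq_of_mem_U {q : SSp N} (hq : q ∈ U N m x) {i : ℕ} (hi : i < m) : q i = x i :=
  (mem_filter.1 hq).2.2 i hi

lemma mem_V_of_mem_cyl {p : SSp N} (hp : p ∈ V N m) (hx : x ∈ V N n)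
    (hxp : x ∈ cyl N (m + 1) p) : p ∈ V N n := by
  refine mem_V.2 fun i hi => ?_
  rcases lt_or_ge i m with him | him
  · calc
      p i = x i := (hxp i (by lia)).symm
      _ = x (i + 1) := mem_V.1 hx i hi
      _ = p (i + 1) := hxp (i + 1) (by lia)
  · exact mem_V.1 hp i him

end Vertices

section Energy

variable {N m n : ℕ} {v : SSp N → ℝ}

lemma H_eq_zero_of_lt_kappa {x : SSp N} (h : m < kappa N x) (v : SSp N → ℝ) :
    H N m v x = 0 := by
  rw [H, Icc_eq_empty_of_lt h, sum_empty]

lemma H_eq_of_dependsOn (hv : DependsOn v (Set.Iic m)) (hmn : m ≤ n) :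
    H N n v = H N m v := by
  funext x
  refine (sum_subset (Icc_subset_Icc_right hmn) fun i hi him => ?_).symm
  have hmi : m < i := not_le.1 fun h => him (mem_Icc.2 ⟨(mem_Icc.1 hi).1, h⟩)
  have hvq : ∀ q ∈ U N i x, v q = v x :=
    fun q hq => hv fun j hj => eq_of_mem_U hq (hj.trans_lt hmi)
  exact sum_eq_zero fun q hq => sub_eq_zero.2 (hvq q hq)

lemma EH_eq_of_dependsOn (hv : DependsOn v (Set.Iic m)) (hmn : m ≤ n) (u : SSp N → ℝ) :
    EH N n u v = EH N m u v := by
  have hzero : ∀ x ∈ V N n, x ∉ V N m → u x * H N m v x = 0 := fun x hxn hxm => by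
    rw [H_eq_zero_of_lt_kappa (lt_kappa_of_mem_of_notMem hxn hxm), mul_zero]
  rw [EH, EH, H_eq_of_dependsOn hv hmn, sum_subset (V_mono_s5 hmn) hzero]

lemma memDomE_of_dependsOn (hv : DependsOn v (Set.Iic m)) : MemDomE N v :=
  ⟨continuous_of_dependsOn_finite (Set.finite_Iic m) hv, EH N m v v,
    tendsto_atTop_of_eventually_const fun _ hmn => EH_eq_of_dependsOn hv hmn v⟩

end Energy

lemma dependsOn_chi (N m : ℕ) (p : SSp N) : DependsOn (chi N m p) (Set.Iic m) := by
  intro x y hxy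
  have hmem : x ∈ cyl N (m + 1) p ↔ y ∈ cyl N (m + 1) p :=
    forall₂_congr fun i hi => by rw [hxy i (Nat.lt_succ_iff.1 hi)]
  simp only [chi, Set.indicator_apply, hmem, Pi.one_apply]

lemma chi_eq_zero_of_mem_V {N M m : ℕ} {p q : SSp N} (hp : p ∈ V N m) (hpM : p ∉ V N M)
    (hq : q ∈ V N M) : chi N m p q = 0 :=
  Set.indicator_of_notMem (fun hqp => hpM (mem_V_of_mem_cyl hp hq hqp)) _

/-- For `M ≥ 0`, `m ≥ M+1` and `p ∈ V_m ∖ V_M`, the indicator `χ_p^m`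
of `[p_1 ⋯ p_{m+1}]` vanishes on `V_M` and has finite energy: `χ_p^m ∈ dom_M E`. -/
theorem statement5 (N : ℕ) (hN : 2 ≤ N) (M m : ℕ) (hm : M + 1 ≤ m)
    (p : SSp N) (hp : p ∈ V N m) (hpM : p ∉ V N M) :
    MemDomME N M (chi N m p) :=
  ⟨memDomE_of_dependsOn (dependsOn_chi N m p), fun _ hq => chi_eq_zero_of_mem_V hp hpM hq⟩
end
end
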